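/- Let A = ℂ[x, y, z] with the exact Poisson bracket {-,-}_f for some f ∈ A, let (α, β, γ) ∈ ℂ³, let J = (x − α, y − β, z − γ) and let λ = f(α, β, γ). Then the following are equivalent: (1) J is a Poisson ideal of A; (2) ∂f/∂x ∈ J, ∂f/∂y ∈ J and ∂f/∂z ∈ J; (3) f − λ ∈ J². -/

import Mathlib

open MvPolynomial in
/-- The exact Poisson bracket `{-,-}_f` on `ℂ[x, y, z]` determined by `f`:
`{g,h}_f = f_x (g_y h_z - g_z h_y) + f_y (g_z h_x - g_x h_z) + f_z (g_x h_y - g_y h_x)`. -/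
noncomputable def exactBr (f : MvPolynomial (Fin 3) ℂ) :
    MvPolynomial (Fin 3) ℂ → MvPolynomial (Fin 3) ℂ → MvPolynomial (Fin 3) ℂ :=
  fun g h =>
    pderiv 0 f * (pderiv 1 g * pderiv 2 h - pderiv 2 g * pderiv 1 h)
    + pderiv 1 f * (pderiv 2 g * pderiv 0 h - pderiv 0 g * pderiv 2 h)
    + pderiv 2 f * (pderiv 0 g * pderiv 1 h - pderiv 1 g * pderiv 0 h)

/-!
The coordinates `vᵢ = Xᵢ - pᵢ` generate the ideal `J` of the point `p`, and `∂ⱼ vᵢ = δᵢⱼ`. Writing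
`g ∈ J` as `∑ cᵢ vᵢ`, the Leibniz rule gives `∂ⱼ g ≡ cⱼ` modulo `J`, so the partial derivatives of
`g` all lie in `J` iff `g ∈ J²`; this is applied to `g = f - f(p)`. For the bracket, each `∂ᵢ f` is
itself a bracket of two coordinates: `{Xᵢ₊₁, vᵢ₊₂}_f = ∂ᵢ f`, with indices modulo `3`.
-/

section Derivation

variable {R A ι : Type*} [CommSemiring R] [CommRing A] [Algebra R A]

theorem derivation_mem_pow_of_mem_pow_succ (D : Derivation R A A) {I : Ideal A} {n : ℕ} {a : A}
    (ha : a ∈ I ^ (n + 1)) : D a ∈ I ^ n := by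
  induction n generalizing a with
  | zero => simp
  | succ n ih =>
    rw [pow_succ] at ha
    induction ha using Submodule.mul_induction_on' with
    | mem_mul_mem b hb c hc =>
      have hcDb : c * D b ∈ I ^ (n + 1) := pow_succ' I n ▸ Ideal.mul_mem_mul hc (ih hb)
      rw [D.leibniz]
      exact add_mem (Ideal.mul_mem_right _ _ hb) hcDb
    | add b _ c _ hb hc =>
      rw [map_add]
      exact add_mem hb hc

variable [DecidableEq ι] {D : ι → Derivation R A A} {v : ι → A}

theorem derivation_finsuppSum_sub_mem_span_range
    (hD : ∀ i j, D i (v j) = (Pi.single i 1 : ι → A) j) (c : ι →₀ A) (j : ι) :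
    D j (c.sum fun i a => a * v i) - c j ∈ Ideal.span (Set.range v) := by
  have hDj : D j (c.sum fun i a => a * v i) = c j + c.sum fun i a => D j a * v i := by
    simp [map_finsuppSum, hD, Pi.single_apply, Finsupp.sum_add, mul_comm (v _)]
  rw [hDj, add_sub_cancel_left]
  exact Ideal.sum_mem _ fun i _ => Ideal.mul_mem_left _ _ (Ideal.subset_span ⟨i, rfl⟩)

theorem mem_span_range_sq_iff_forall_derivation_mem
    (hD : ∀ i j, D i (v j) = (Pi.single i 1 : ι → A) j)
    {g : A} (hg : g ∈ Ideal.span (Set.range v)) :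
    g ∈ Ideal.span (Set.range v) ^ 2 ↔ ∀ j, D j g ∈ Ideal.span (Set.range v) := by
  refine ⟨fun h j => by simpa using derivation_mem_pow_of_mem_pow_succ (D j) h, fun h => ?_⟩
  obtain ⟨c, rfl⟩ := Finsupp.mem_ideal_span_range_iff_exists_finsupp.1 hg
  have hc (j : ι) : c j ∈ Ideal.span (Set.range v) :=
    (Submodule.sub_mem_iff_right _ (h j)).1 (derivation_finsuppSum_sub_mem_span_range hD c j)
  rw [pow_two]
  exact Ideal.sum_mem _ fun i _ => Ideal.mul_mem_mul (hc i) (Ideal.subset_span ⟨i, rfl⟩)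

end Derivation

section PointIdeal

open MvPolynomial

variable {σ R : Type*} [CommRing R]

/-- The ideal of `R[X_i : i ∈ σ]` attached to the point `p`, given by its generators
`X_i - p_i`. -/
noncomputable def pointIdeal (p : σ → R) : Ideal (MvPolynomial σ R) :=
  Ideal.span (Set.range fun i => X i - C (p i))

theorem X_sub_C_mem_pointIdeal (p : σ → R) (i : σ) : X i - C (p i) ∈ pointIdeal p :=
  Ideal.subset_span ⟨i, rfl⟩

theorem sub_C_eval_mem_pointIdeal (p : σ → R) (f : MvPolynomial σ R) :
    f - C (eval p f) ∈ pointIdeal p := by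
  induction f using MvPolynomial.induction_on with
  | C a => simp
  | add f g hf hg =>
    rw [map_add, map_add, add_sub_add_comm]
    exact add_mem hf hg
  | mul_X f i hf =>
    have hsplit : f * X i - C (eval p (f * X i)) =
        (f - C (eval p f)) * X i + C (eval p f) * (X i - C (p i)) := by
      simp only [map_mul, eval_X]
      ring
    rw [hsplit]
    exact add_mem (Ideal.mul_mem_right _ _ hf)
      (Ideal.mul_mem_left _ _ (X_sub_C_mem_pointIdeal p i))

theorem forall_pderiv_mem_pointIdeal_iff (p : σ → R) (f : MvPolynomial σ R) :
    (∀ i, pderiv i f ∈ pointIdeal p) ↔ f - C (eval p f) ∈ pointIdeal p ^ 2 := by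
  classical
  have hdual (i j : σ) : pderiv i (X j - C (p j)) = (Pi.single i 1 : σ → MvPolynomial σ R) j := by
    rw [map_sub, pderiv_C, sub_zero, pderiv_X]
  simpa only [pointIdeal, map_sub, pderiv_C, sub_zero] using
    (mem_span_range_sq_iff_forall_derivation_mem hdual (sub_C_eval_mem_pointIdeal p f)).symm

theorem pointIdeal_vec3 (a b c : R) :
    pointIdeal ![a, b, c] = Ideal.span {X 0 - C a, X 1 - C b, X 2 - C c} :=
  congrArg Ideal.span <| Set.ext fun q => by simp [Fin.exists_fin_succ, eq_comm]

end PointIdeal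

/-- `I` is a Poisson ideal for the bracket `br`. Only the ideal condition is recorded: `br` is an
arbitrary binary operation, so that no Poisson axiom has to be supplied. -/
def IsPoissonIdeal {A : Type*} [CommRing A] (br : A → A → A) (I : Ideal A) : Prop :=
  ∀ a, ∀ i ∈ I, br a i ∈ I

section JacobianBracket

open MvPolynomial
open scoped Matrix

variable {R : Type*} [CommRing R]

/-- The exact bracket `{g, h}_f` over an arbitrary coefficient ring, encoded as the triple product
`∇f · (∇g × ∇h)`, that is, the Jacobian determinant of `(f, g, h)`. -/
noncomputable def jacobianBracket (f g h : MvPolynomial (Fin 3) R) : MvPolynomial (Fin 3) R :=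
  (fun i => pderiv i f) ⬝ᵥ (fun i => pderiv i g) ⨯₃ (fun i => pderiv i h)

theorem exactBr_eq_jacobianBracket (f : MvPolynomial (Fin 3) ℂ) :
    exactBr f = jacobianBracket f := by
  funext g h
  simp [exactBr, jacobianBracket, cross_apply, dotProduct, Fin.sum_univ_three]

theorem jacobianBracket_mem_of_forall_pderiv_mem {f : MvPolynomial (Fin 3) R}
    {I : Ideal (MvPolynomial (Fin 3) R)} (hf : ∀ i, pderiv i f ∈ I)
    (g h : MvPolynomial (Fin 3) R) : jacobianBracket f g h ∈ I := by
  rw [jacobianBracket, dotProduct]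
  exact I.sum_mem fun i _ => I.mul_mem_right _ (hf i)

theorem jacobianBracket_X_X_sub_C (f : MvPolynomial (Fin 3) R) (i : Fin 3) (c : R) :
    jacobianBracket f (X (i + 1)) (X (i + 2) - C c) = pderiv i f := by
  fin_cases i <;> simp [jacobianBracket, cross_apply, dotProduct, Fin.sum_univ_three, pderiv_X]

theorem isPoissonIdeal_jacobianBracket_iff {f : MvPolynomial (Fin 3) R} {p : Fin 3 → R}
    {I : Ideal (MvPolynomial (Fin 3) R)} (hI : ∀ i, X i - C (p i) ∈ I) :
    IsPoissonIdeal (jacobianBracket f) I ↔ ∀ i, pderiv i f ∈ I := by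
  refine ⟨fun h i => ?_, fun hf a k _ => jacobianBracket_mem_of_forall_pderiv_mem hf a k⟩
  rw [← jacobianBracket_X_X_sub_C f i (p (i + 2))]
  exact h _ _ (hI (i + 2))

theorem stmt14_general (f : MvPolynomial (Fin 3) R) (p : Fin 3 → R) :
    (IsPoissonIdeal (jacobianBracket f) (pointIdeal p) ↔ ∀ i, pderiv i f ∈ pointIdeal p) ∧
      ((∀ i, pderiv i f ∈ pointIdeal p) ↔ f - C (eval p f) ∈ pointIdeal p ^ 2) :=
  ⟨isPoissonIdeal_jacobianBracket_iff (X_sub_C_mem_pointIdeal p),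
    forall_pderiv_mem_pointIdeal_iff p f⟩

end JacobianBracket

open MvPolynomial in
/-- Let `A = ℂ[x,y,z]` with the exact bracket `{-,-}_f`, let
`J = (x − α, y − β, z − γ)` and `λ = f(α, β, γ)`.  The following are equivalent:
(1) `J` is a Poisson ideal; (2) the three partial derivatives of `f` lie in `J`;
(3) `f − λ ∈ J²`. -/
theorem stmt14 (f : MvPolynomial (Fin 3) ℂ) (α β γ : ℂ) :
    let J : Ideal (MvPolynomial (Fin 3) ℂ) :=
      Ideal.span {X 0 - C α, X 1 - C β, X 2 - C γ}
    let lam : ℂ := eval ![α, β, γ] f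
    ((∀ a : MvPolynomial (Fin 3) ℂ, ∀ i ∈ J, exactBr f a i ∈ J) ↔
      (pderiv 0 f ∈ J ∧ pderiv 1 f ∈ J ∧ pderiv 2 f ∈ J)) ∧
    ((pderiv 0 f ∈ J ∧ pderiv 1 f ∈ J ∧ pderiv 2 f ∈ J) ↔
      f - C lam ∈ J ^ 2) := by
  simpa [IsPoissonIdeal, ← exactBr_eq_jacobianBracket, pointIdeal_vec3, Fin.forall_fin_succ]
    using stmt14_general f ![α, β, γ]
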